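/- arXiv:gr-qc/0108068 — 5 statements merged into one kernel-verified Lean document; each statement's English description precedes it below -/
import Mathlib

section
/- For every pair of real numbers μ₀, μ₁ there exists δ ∈ (0,1) such that, writing N_n = n(n−1)/2 and k_n = ⌈δ·N_n⌉, one has (1/n!) · binomial(N_n, k_n) · exp(−μ₁·(k_n + n) − μ₀·(n+1)) → ∞ as n → ∞. -/
open Filter

/-!
Fix `x = exp (|μ₁| + 1)` and `δ = 1 / (2 x)`. The elementary bound `binomial(N, k) ≥ (N / k) ^ k`,
in the form of `pow_le_choose_of_mul_le`, gives `binomial(N, k) ≥ x ^ k` for `k = ⌈δ N⌉` once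
`N ≥ 2 x`, so the binomial coefficient beats `exp (μ₁ k)` by a factor of at least `exp k`. As `k`
is at least `δ n (n - 1) / 2`, quadratic in `n`, this dominates both the linear terms in the
exponent and `n! ≤ exp (n log n)`.
-/

/-- The bound `(N / k) ^ k ≤ binomial(N, k)`, with `N / k` replaced by any smaller `x ≥ 1`;
the hypotheses imply `k ≤ N`. -/
theorem pow_le_choose_of_mul_le {x : ℝ} (hx : 1 ≤ x) (k : ℕ) :
    ∀ N : ℕ, x * k ≤ N → x ^ k ≤ (N.choose k : ℝ) := by
  induction k with
  | zero => intro N _; simp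
  | succ k ih =>
    intro N hN
    cases N with
    | zero =>
      push_cast at hN
      nlinarith [(Nat.cast_nonneg k : (0 : ℝ) ≤ k)]
    | succ N =>
      push_cast at hN
      have h1 : x ^ k ≤ (N.choose k : ℝ) := ih N (by linarith)
      have h2 : ((N : ℝ) + 1) * (N.choose k : ℝ) = ((N + 1).choose (k + 1) : ℝ) * ((k : ℝ) + 1) := by
        exact_mod_cast Nat.add_one_mul_choose_eq N k
      have hk : (0 : ℝ) < (k : ℝ) + 1 := by positivity
      refine le_of_mul_le_mul_right ?_ hk
      calc x ^ (k + 1) * ((k : ℝ) + 1) = (x * (k + 1)) * x ^ k := by ring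
        _ ≤ ((N : ℝ) + 1) * (N.choose k : ℝ) := by gcongr
        _ = _ := h2

theorem factorial_le_exp_mul_log {n : ℕ} (hn : 0 < n) :
    (n.factorial : ℝ) ≤ Real.exp (n * Real.log n) := by
  have hn' : (0 : ℝ) < n := by exact_mod_cast hn
  rw [Real.exp_nat_mul, Real.exp_log hn']
  exact_mod_cast Nat.factorial_le_pow n

/-- Tangent-line bound for the logarithm with slope `ε`. -/
theorem log_le_mul_add {ε t : ℝ} (hε : 0 < ε) (ht : 0 < t) :
    Real.log t ≤ ε * t + (-Real.log ε - 1) := by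
  have h := Real.log_le_sub_one_of_pos (mul_pos hε ht)
  rw [Real.log_mul hε.ne' ht.ne'] at h
  linarith

/-- For every pair of real numbers `μ₀, μ₁` there exists `δ ∈ (0,1)` such that, writing
`N_n = n(n−1)/2` and `k_n = ⌈δ·N_n⌉`, the quantity
`(1/n!) · binomial(N_n, k_n) · exp(−μ₁·(k_n + n) − μ₀·(n+1))` tends to infinity as `n → ∞`. -/
theorem chemical_potential_not_stable (μ₀ μ₁ : ℝ) :
    ∃ δ : ℝ, 0 < δ ∧ δ < 1 ∧
      Tendsto (fun n : ℕ =>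
          (1 / (Nat.factorial n : ℝ)) *
            (Nat.choose (n * (n - 1) / 2) ⌈δ * ((n * (n - 1) / 2 : ℕ) : ℝ)⌉₊ : ℝ) *
            Real.exp (-μ₁ * ((⌈δ * ((n * (n - 1) / 2 : ℕ) : ℝ)⌉₊ : ℝ) + (n : ℝ))
              - μ₀ * ((n : ℝ) + 1)))
        atTop atTop := by
  obtain ⟨x, hxdef⟩ : ∃ x : ℝ, x = Real.exp (|μ₁| + 1) := ⟨_, rfl⟩
  have hx1 : 1 < x := by
    rw [hxdef]
    exact Real.one_lt_exp_iff.mpr (by positivity)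
  have hx0 : 0 < x := by linarith
  obtain ⟨δ, hδ⟩ : ∃ δ : ℝ, δ = 1 / (2 * x) := ⟨_, rfl⟩
  have hδ0 : 0 < δ := by rw [hδ]; positivity
  have hδx : x * δ = 1 / 2 := by rw [hδ]; field_simp
  have hδ1 : δ < 1 := by nlinarith
  refine ⟨δ, hδ0, hδ1, ?_⟩
  -- The slope `δ / 4` makes `n log n` absorb only half of the gain `δ n (n - 1) / 2`.
  obtain ⟨C, hC⟩ : ∃ C : ℝ, C = -Real.log (δ / 4) - 1 := ⟨_, rfl⟩
  have hlim : Tendsto (fun n : ℕ =>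
      Real.exp ((n : ℝ) * (δ / 4 * n + -(C + μ₁ + μ₀ + δ / 2)) + -μ₀)) atTop atTop := by
    have hn : Tendsto (fun n : ℕ => (n : ℝ)) atTop atTop := tendsto_natCast_atTop_atTop
    exact Real.tendsto_exp_atTop.comp (tendsto_atTop_add_const_right _ _
      (hn.atTop_mul_atTop₀ (tendsto_atTop_add_const_right _ _
        (hn.const_mul_atTop (by positivity)))))
  refine tendsto_atTop_mono' atTop ?_ hlim
  have hev : ∀ᶠ n : ℕ in atTop, 4 * x + 1 ≤ (n : ℝ) :=
    tendsto_natCast_atTop_atTop.eventually_ge_atTop _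
  filter_upwards [hev] with n hn
  have hnR : (1 : ℝ) < n := by linarith
  have hn0 : 0 < n := by
    have : 1 < n := by exact_mod_cast hnR
    omega
  have hN : ((n * (n - 1) / 2 : ℕ) : ℝ) = (n : ℝ) * (n - 1) / 2 := by
    rw [Nat.cast_div (Nat.even_mul_pred_self n).two_dvd (by norm_num), Nat.cast_mul,
      Nat.cast_pred hn0]
    norm_num
  generalize n * (n - 1) / 2 = N at hN ⊢
  have hNx : 2 * x ≤ N := by rw [hN]; nlinarith
  have hk1 : δ * N ≤ (⌈δ * (N : ℝ)⌉₊ : ℝ) := Nat.le_ceil _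
  have hk2 : (⌈δ * (N : ℝ)⌉₊ : ℝ) < δ * N + 1 := Nat.ceil_lt_add_one (by positivity)
  generalize ⌈δ * (N : ℝ)⌉₊ = k at hk1 hk2 ⊢
  have hxk : x * k ≤ N := by
    calc x * k ≤ x * (δ * N + 1) := by gcongr
      _ = x * δ * N + x := by ring
      _ ≤ N := by rw [hδx]; linarith
  have hch : Real.exp (k * (|μ₁| + 1)) ≤ (N.choose k : ℝ) := by
    rw [Real.exp_nat_mul, ← hxdef]
    exact pow_le_choose_of_mul_le hx1.le k N hxk
  have hfac : Real.exp (-(n * Real.log n)) ≤ 1 / (n.factorial : ℝ) := by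
    rw [Real.exp_neg, ← one_div]
    exact one_div_le_one_div_of_le (by positivity) (factorial_le_exp_mul_log hn0)
  have hlog : (n : ℝ) * Real.log n ≤ n * (δ / 4 * n + C) := by
    rw [hC]
    gcongr
    exact log_le_mul_add (by positivity) (by linarith)
  have hμ : (k : ℝ) * μ₁ ≤ k * |μ₁| := by
    gcongr
    exact le_abs_self μ₁
  rw [hN] at hk1
  calc Real.exp ((n : ℝ) * (δ / 4 * n + -(C + μ₁ + μ₀ + δ / 2)) + -μ₀)
      ≤ Real.exp (-(n * Real.log n)) * Real.exp (k * (|μ₁| + 1)) *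
          Real.exp (-μ₁ * ((k : ℝ) + (n : ℝ)) - μ₀ * ((n : ℝ) + 1)) := by
        rw [← Real.exp_add, ← Real.exp_add]
        apply Real.exp_le_exp.mpr
        linarith
    _ ≤ _ := by gcongr
end

section
/- F(0,p) = (2p)!/(p!·(p+1)!) (the p-th Catalan number) for every integer p ≥ 0, and F(b,0) = (2b)!/(b!·2^b) = (2b−1)·(2b−3)···3·1 for every integer b ≥ 0. -/
/-!
On the line `b = 0` the term `F(b-1,p)` vanishes and the inner sum has the single index `k = 0`,
so the recurrence becomes the Segner convolution `F(0,p+1) = ∑ F(0,j) F(0,p-j)`, which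
characterizes the Catalan numbers (`walshLehman_zero_left`). On the line `p = 0` the double sum is
empty and the recurrence becomes `F(b,0) = (2b-1) F(b-1,0)`. Both divisions in the closed forms are
exact: they follow from the product identities `catalan_mul_factorials` and
`walshLehman_zero_right_mul`.
-/

open Finset

/-- The Walsh–Lehman array `F(b,p)` counting rooted maps with `p+1` vertices and `b+p`
edges on closed compact oriented surfaces (summed over all genera), characterized by its
recurrence: `F(b,p) = 0` for `b < 0` or `p < 0`, `F(0,0) = 1`, and otherwise
`F(b,p) = Σ_{j=0}^{p-1} Σ_{k=0}^{b} F(k,j)·F(b−k, p−j−1) + (2(b+p)−1)·F(b−1,p)`. -/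
def SatisfiesWalshLehman (F : ℤ → ℤ → ℕ) : Prop :=
  (∀ b p : ℤ, b < 0 ∨ p < 0 → F b p = 0) ∧
  F 0 0 = 1 ∧
  (∀ b p : ℤ, 0 ≤ b → 0 ≤ p → ¬(b = 0 ∧ p = 0) →
    F b p =
      (∑ j ∈ Finset.range p.toNat, ∑ k ∈ Finset.range (b.toNat + 1),
        F k j * F (b - k) (p - j - 1)) +
      (2 * (b + p) - 1).toNat * F (b - 1) p)

theorem walshLehman_zero_left {F : ℤ → ℤ → ℕ} (hF : SatisfiesWalshLehman F) (p : ℕ) :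
    F 0 p = catalan p := by
  obtain ⟨hneg, h0, hrec⟩ := hF
  induction p using Nat.strong_induction_on with
  | _ p ih =>
    cases p with
    | zero => simpa using h0
    | succ n =>
      rw [hrec 0 ((n + 1 : ℕ) : ℤ) le_rfl (by positivity) (by omega),
        hneg (0 - 1) _ (Or.inl (by norm_num)), catalan_succ, mul_zero, add_zero,
        Int.toNat_natCast, Fin.sum_univ_eq_sum_range (fun i => catalan i * catalan (n - i))]
      refine Finset.sum_congr rfl fun j hj => ?_
      have hj' : j < n + 1 := Finset.mem_range.mp hj
      have hsub : ((n + 1 : ℕ) : ℤ) - j - 1 = ((n - j : ℕ) : ℤ) := by omega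
      rw [hsub, ← ih j hj', ← ih (n - j) (by omega)]
      simp

theorem catalan_mul_factorials (p : ℕ) :
    catalan p * (Nat.factorial p * Nat.factorial (p + 1)) = Nat.factorial (2 * p) := by
  have h1 := succ_mul_catalan_eq_centralBinom p
  have h2 := Nat.choose_mul_factorial_mul_factorial (show p ≤ 2 * p by omega)
  rw [show 2 * p - p = p by omega, ← Nat.centralBinom_eq_two_mul_choose, ← h1] at h2
  rw [← h2, Nat.factorial_succ]
  ring

theorem walshLehman_zero_right_mul {F : ℤ → ℤ → ℕ} (hF : SatisfiesWalshLehman F) (b : ℕ) :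
    F b 0 * (Nat.factorial b * 2 ^ b) = Nat.factorial (2 * b) := by
  obtain ⟨-, h0, hrec⟩ := hF
  induction b with
  | zero => simp [h0]
  | succ n ih =>
    have hstep : F ((n + 1 : ℕ) : ℤ) 0 = (2 * n + 1) * F n 0 := by
      rw [hrec ((n + 1 : ℕ) : ℤ) 0 (by positivity) le_rfl (by omega),
        show (2 * (((n + 1 : ℕ) : ℤ) + 0) - 1).toNat = 2 * n + 1 by omega,
        show ((n + 1 : ℕ) : ℤ) - 1 = n by omega]
      simp
    rw [hstep, show 2 * (n + 1) = 2 * n + 1 + 1 by ring, Nat.factorial_succ (2 * n + 1),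
      Nat.factorial_succ (2 * n), ← ih, Nat.factorial_succ]
    ring

/-- `F(0,p) = (2p)!/(p!·(p+1)!)` (the `p`-th Catalan number) for every integer `p ≥ 0`,
and `F(b,0) = (2b)!/(b!·2^b)` for every integer `b ≥ 0`. -/
theorem walshLehman_boundary_values (F : ℤ → ℤ → ℕ) (hF : SatisfiesWalshLehman F) :
    (∀ p : ℕ, F 0 p = Nat.factorial (2 * p) / (Nat.factorial p * Nat.factorial (p + 1))) ∧
    (∀ b : ℕ, F b 0 = Nat.factorial (2 * b) / (Nat.factorial b * 2 ^ b)) := by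
  refine ⟨fun p => ?_, fun b => ?_⟩
  · rw [walshLehman_zero_left hF p]
    exact (Nat.div_eq_of_eq_mul_left (by positivity) (catalan_mul_factorials p).symm).symm
  · exact (Nat.div_eq_of_eq_mul_left (by positivity) (walshLehman_zero_right_mul hF b).symm).symm
end

section
/- There exist constants 0 < c₁ < c₂ < ∞ such that for all integers b, p ≥ 0 with b + p ≥ 1 one has c₁^{b+p} < F(b,p)/b! < c₂^{b+p}. -/
/-!
Write `F b p` for natural arguments. Every term of the recurrence is nonnegative.

*Lower bound.* The term `j = k = 0` of the convolution gives `F b (p+1) ≥ F b p`, and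
`F b 0 = (2b-1) F (b-1) 0` gives `F b 0 ≥ b!`. So `F b p / b! ≥ 1`, and `c₁ = 1/2` works.

*Upper bound.* The explicit majorant `F b p ≤ b! * C(b+p, b) * 4^b * 6^p * catalan p`
(`upper_bound`) is preserved by the recurrence. The binomial factor absorbs the coefficient
`2(b+p)-1`, since `(b+p) C(b+p-1, b-1) = b C(b+p, b)`, and it is supermultiplicative, so it can be
pulled out of the convolution. What is left of the sum over `k` is `∑ k! (b-k)! ≤ 3 b!`
(`sum_factorial_mul_le`), and the sum over `j` is the Catalan recurrence. With the bases `4` and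
`6`, the convolution and the linear term each contribute at most half of the majorant. Finally
`C(b+p, b) ≤ 2^(b+p)` and `catalan p ≤ 4^p`, so the majorant is at most `b! * 48^(b+p)`.
-/

open Finset

/-- The recurrence on the line `p = 0`, where the convolution is empty. -/
lemma rec_zero {F : ℤ → ℤ → ℕ} (hF : SatisfiesWalshLehman F) (b : ℕ) :
    F (b + 1 : ℕ) (0 : ℕ) = (2 * b + 1) * F b (0 : ℕ) := by
  have h := hF.2.2 (b + 1 : ℕ) (0 : ℕ) (by omega) (by omega) (by omega)
  rw [h]
  have e1 : (2 * (((b + 1 : ℕ) : ℤ) + ((0 : ℕ) : ℤ)) - 1).toNat = 2 * b + 1 := by omega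
  have e2 : ((b + 1 : ℕ) : ℤ) - 1 = b := by omega
  rw [e1, e2]
  simp

/-- The recurrence for positive second argument, with the convolution over antidiagonals. -/
lemma rec_succ {F : ℤ → ℤ → ℕ} (hF : SatisfiesWalshLehman F) (b p : ℕ) :
    F b (p + 1 : ℕ) =
      (∑ x ∈ antidiagonal p, ∑ y ∈ antidiagonal b, F y.1 x.1 * F y.2 x.2) +
      (2 * (b + p) + 1) * F ((b : ℤ) - 1) (p + 1 : ℕ) := by
  have h := hF.2.2 b (p + 1 : ℕ) (by omega) (by omega) (by omega)
  rw [h]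
  have e1 : (2 * ((b : ℤ) + ((p + 1 : ℕ) : ℤ)) - 1).toNat = 2 * (b + p) + 1 := by omega
  rw [e1]
  congr 1
  rw [Finset.Nat.sum_antidiagonal_eq_sum_range_succ_mk]
  simp only [Int.toNat_natCast]
  refine Finset.sum_congr rfl fun j hj => ?_
  rw [Finset.Nat.sum_antidiagonal_eq_sum_range_succ_mk]
  refine Finset.sum_congr rfl fun k hk => ?_
  rw [Finset.mem_range] at hj hk
  have e2 : (b : ℤ) - k = ((b - k : ℕ) : ℤ) := by omega
  have e3 : ((p + 1 : ℕ) : ℤ) - j - 1 = ((p - j : ℕ) : ℤ) := by omega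
  rw [e2, e3]

lemma factorial_le {F : ℤ → ℤ → ℕ} (hF : SatisfiesWalshLehman F) (b p : ℕ) :
    b.factorial ≤ F b p := by
  induction p with
  | zero =>
    induction b with
    | zero => simp [hF.2.1]
    | succ b ih =>
      rw [rec_zero hF, Nat.factorial_succ]
      exact Nat.mul_le_mul (by omega) ih
  | succ p ih =>
    rw [rec_succ hF]
    have h1 := Finset.single_le_sum (s := antidiagonal b) (a := (0, b))
      (f := fun y : ℕ × ℕ => F y.1 (0 : ℕ) * F y.2 p) (fun _ _ => Nat.zero_le _) (by simp)
    have h2 := Finset.single_le_sum (s := antidiagonal p) (a := (0, p))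
      (f := fun x : ℕ × ℕ => ∑ y ∈ antidiagonal b, F y.1 x.1 * F y.2 x.2)
      (fun _ _ => Nat.zero_le _) (by simp)
    have h0 : F ((0 : ℕ) : ℤ) ((0 : ℕ) : ℤ) = 1 := by simpa using hF.2.1
    simp only [h0, one_mul] at h1 h2
    exact le_add_right (ih.trans (h1.trans h2))

/-- Since `k! l! (k + l + 2) = k! (l+1)! + (k+1)! l!`, consecutive sums `T b = ∑ k! l!` satisfy
`2 T (b+1) = (b+2) T b + 2 (b+1)!`. -/
lemma two_mul_sum_factorial_mul (b : ℕ) :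
    2 * ∑ y ∈ antidiagonal (b + 1), y.1.factorial * y.2.factorial =
      (b + 2) * (∑ y ∈ antidiagonal b, y.1.factorial * y.2.factorial) +
        2 * (b + 1).factorial := by
  have h1 := Finset.Nat.sum_antidiagonal_succ (n := b)
    (f := fun y : ℕ × ℕ => y.1.factorial * y.2.factorial)
  have h2 := Finset.Nat.sum_antidiagonal_succ' (n := b)
    (f := fun y : ℕ × ℕ => y.1.factorial * y.2.factorial)
  have h3 : (b + 2) * (∑ y ∈ antidiagonal b, y.1.factorial * y.2.factorial) =
      (∑ y ∈ antidiagonal b, (y.1 + 1).factorial * y.2.factorial) +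
      ∑ y ∈ antidiagonal b, y.1.factorial * (y.2 + 1).factorial := by
    rw [Finset.mul_sum, ← Finset.sum_add_distrib]
    refine Finset.sum_congr rfl fun y hy => ?_
    rw [← HasAntidiagonal.mem_antidiagonal.1 hy, Nat.factorial_succ, Nat.factorial_succ]
    ring
  simp only [Nat.factorial_zero, one_mul, mul_one] at h1 h2
  omega

lemma sum_factorial_mul_le (b : ℕ) :
    ∑ y ∈ antidiagonal b, y.1.factorial * y.2.factorial ≤ 3 * b.factorial := by
  -- The inductive step needs `3 (b+2) ≤ 4 (b+1)`, so it starts at `b = 2`.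
  rcases Nat.lt_or_ge b 2 with hb | hb
  · interval_cases b <;> decide
  induction b, hb using Nat.le_induction with
  | base => decide
  | succ b hb ih =>
    have h := two_mul_sum_factorial_mul b
    have hs : (b + 1).factorial = (b + 1) * b.factorial := Nat.factorial_succ b
    nlinarith [Nat.mul_le_mul_left (b + 2) ih, Nat.mul_le_mul_right b.factorial hb]

/-- One term of the Vandermonde convolution, followed by monotonicity in the upper index. -/
lemma choose_mul_choose_le (k l j m : ℕ) :
    (k + j).choose k * (l + m).choose l ≤ (k + l + (j + m + 1)).choose (k + l) := by
  have h := Finset.single_le_sum (s := antidiagonal (k + l)) (a := (k, l))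
    (f := fun y : ℕ × ℕ => (k + j).choose y.1 * (l + m).choose y.2)
    (fun _ _ => Nat.zero_le _) (by simp)
  rw [← Nat.add_choose_eq] at h
  exact h.trans (Nat.choose_le_choose _ (by omega))

/-- If the majorant holds in every column of index at most `p`, the convolution at `(b, p + 1)`
is at most half of the majorant there. -/
lemma two_mul_conv_le {F : ℤ → ℤ → ℕ} (b p : ℕ)
    (ih : ∀ q ≤ p, ∀ a : ℕ,
      F a q ≤ a.factorial * (a + q).choose a * 4 ^ a * (6 ^ q * catalan q)) :
    2 * ∑ x ∈ antidiagonal p, ∑ y ∈ antidiagonal b, F y.1 x.1 * F y.2 x.2 ≤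
      b.factorial * (b + (p + 1)).choose b * 4 ^ b * (6 ^ (p + 1) * catalan (p + 1)) := by
  have key : ∀ x ∈ antidiagonal p, ∑ y ∈ antidiagonal b, F y.1 x.1 * F y.2 x.2 ≤
      (3 * b.factorial * (b + (p + 1)).choose b * 4 ^ b * 6 ^ p) *
        (catalan x.1 * catalan x.2) := by
    rintro ⟨j, m⟩ hx
    have hjm : j + m = p := by simpa using hx
    calc ∑ y ∈ antidiagonal b, F y.1 j * F y.2 m
        ≤ ∑ y ∈ antidiagonal b, (y.1.factorial * y.2.factorial) *
            ((b + (p + 1)).choose b * 4 ^ b * 6 ^ p * (catalan j * catalan m)) := by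
          refine Finset.sum_le_sum ?_
          rintro ⟨k, l⟩ hy
          have hkl : k + l = b := by simpa using hy
          have hc := choose_mul_choose_le k l j m
          subst hkl hjm
          calc F k j * F l m
              ≤ (k.factorial * (k + j).choose k * 4 ^ k * (6 ^ j * catalan j)) *
                (l.factorial * (l + m).choose l * 4 ^ l * (6 ^ m * catalan m)) :=
                Nat.mul_le_mul (ih j (by omega) k) (ih m (by omega) l)
            _ = ((k + j).choose k * (l + m).choose l) * (k.factorial * l.factorial *
                (4 ^ (k + l) * 6 ^ (j + m) * (catalan j * catalan m))) := by
                rw [pow_add, pow_add]; ring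
            _ ≤ (k + l + (j + m + 1)).choose (k + l) * (k.factorial * l.factorial *
                (4 ^ (k + l) * 6 ^ (j + m) * (catalan j * catalan m))) :=
                Nat.mul_le_mul_right _ hc
            _ = _ := by ring
      _ = (∑ y ∈ antidiagonal b, y.1.factorial * y.2.factorial) *
            ((b + (p + 1)).choose b * 4 ^ b * 6 ^ p * (catalan j * catalan m)) := by
          rw [Finset.sum_mul]
      _ ≤ (3 * b.factorial) *
            ((b + (p + 1)).choose b * 4 ^ b * 6 ^ p * (catalan j * catalan m)) :=
          Nat.mul_le_mul_right _ (sum_factorial_mul_le b)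
      _ = _ := by ring
  calc _ ≤ 2 * ∑ x ∈ antidiagonal p,
        (3 * b.factorial * (b + (p + 1)).choose b * 4 ^ b * 6 ^ p) *
        (catalan x.1 * catalan x.2) := Nat.mul_le_mul_left _ (Finset.sum_le_sum key)
    _ = _ := by
      rw [← Finset.mul_sum, ← catalan_succ', pow_succ]; ring

/-- The linear term is at most half of the majorant. Here `d` stands for the factor of the
majorant that depends on `p` alone. -/
lemma two_mul_linear_le (b p d X : ℕ)
    (hX : X ≤ b.factorial * (b + p).choose b * 4 ^ b * d) :
    2 * ((2 * (b + p) + 1) * X) ≤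
      (b + 1).factorial * (b + 1 + p).choose (b + 1) * 4 ^ (b + 1) * d := by
  have hc := Nat.add_one_mul_choose_eq (b + p) b
  have e : b + p + 1 = b + 1 + p := by omega
  calc 2 * ((2 * (b + p) + 1) * X)
      ≤ 2 * ((2 * (b + p + 1)) * (b.factorial * (b + p).choose b * 4 ^ b * d)) := by
        gcongr; omega
    _ = 4 * ((b + p + 1) * (b + p).choose b) * (b.factorial * 4 ^ b * d) := by ring
    _ = _ := by
        rw [hc, Nat.factorial_succ, pow_succ, e]; ring

lemma upper_bound {F : ℤ → ℤ → ℕ} (hF : SatisfiesWalshLehman F) (p : ℕ) :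
    ∀ b : ℕ, F b p ≤ b.factorial * (b + p).choose b * 4 ^ b * (6 ^ p * catalan p) := by
  induction p using Nat.strong_induction_on with
  | _ p ihp =>
  intro b
  induction b with
  | zero =>
    cases p with
    | zero => simp [hF.2.1]
    | succ p =>
      have hc := two_mul_conv_le (F := F) 0 p fun q hq => ihp q (by omega)
      have hz : F (((0 : ℕ) : ℤ) - 1) (p + 1 : ℕ) = 0 := hF.1 _ _ (Or.inl (by omega))
      rw [rec_succ hF, hz]
      omega
  | succ b ihb =>
    have hl := two_mul_linear_le b p _ _ ihb
    cases p with
    | zero =>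
      rw [rec_zero hF]
      simp only [add_zero] at hl ⊢
      omega
    | succ p =>
      have hc := two_mul_conv_le (F := F) (b + 1) p fun q hq => ihp q (by omega)
      have e : ((b + 1 : ℕ) : ℤ) - 1 = b := by omega
      have e' : 2 * (b + 1 + p) + 1 = 2 * (b + (p + 1)) + 1 := by omega
      rw [rec_succ hF, e, e']
      omega

lemma catalan_le (p : ℕ) : catalan p ≤ 4 ^ p := by
  rw [catalan_eq_centralBinom_div]
  refine (Nat.div_le_self _ _).trans ?_
  rw [Nat.centralBinom_eq_two_mul_choose]
  refine (Nat.choose_le_two_pow _ _).trans ?_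
  rw [pow_mul]
  norm_num

lemma le_factorial_mul_pow {F : ℤ → ℤ → ℕ} (hF : SatisfiesWalshLehman F) (b p : ℕ) :
    F b p ≤ b.factorial * 48 ^ (b + p) := by
  calc F b p ≤ b.factorial * (b + p).choose b * 4 ^ b * (6 ^ p * catalan p) := upper_bound hF p b
    _ ≤ b.factorial * 2 ^ (b + p) * 24 ^ b * (6 ^ p * 4 ^ p) := by
        gcongr
        · exact Nat.choose_le_two_pow _ _
        · norm_num
        · exact catalan_le p
    _ = b.factorial * 48 ^ (b + p) := by
        rw [← mul_pow, mul_assoc, mul_assoc, show 6 * 4 = 24 from rfl, ← pow_add, ← mul_pow, show 2 * 24 = 48 from rfl]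

/-- There exist constants `0 < c₁ < c₂ < ∞` such that for all integers `b, p ≥ 0` with
`b + p ≥ 1` one has `c₁^{b+p} < F(b,p)/b! < c₂^{b+p}`. -/
theorem walshLehman_exponential_bounds (F : ℤ → ℤ → ℕ) (hF : SatisfiesWalshLehman F) :
    ∃ c₁ c₂ : ℝ, 0 < c₁ ∧ c₁ < c₂ ∧
      ∀ b p : ℕ, 1 ≤ b + p →
        c₁ ^ (b + p) < (F b p : ℝ) / (Nat.factorial b : ℝ) ∧
        (F b p : ℝ) / (Nat.factorial b : ℝ) < c₂ ^ (b + p) := by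
  refine ⟨1 / 2, 49, by norm_num, by norm_num, fun b p hbp => ?_⟩
  have hpos : (0 : ℝ) < (b.factorial : ℝ) := by exact_mod_cast b.factorial_pos
  have hne : b + p ≠ 0 := by omega
  constructor
  · have h1 : (1 / 2 : ℝ) ^ (b + p) < 1 := pow_lt_one₀ (by norm_num) (by norm_num) hne
    have h2 : (1 : ℝ) ≤ (F b p : ℝ) / (b.factorial : ℝ) := by
      rw [one_le_div hpos]
      exact_mod_cast factorial_le hF b p
    exact h1.trans_le h2
  · have h1 : (48 : ℝ) ^ (b + p) < 49 ^ (b + p) :=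
      pow_lt_pow_left₀ (by norm_num) (by norm_num) hne
    have h2 : (F b p : ℝ) / (b.factorial : ℝ) ≤ 48 ^ (b + p) := by
      rw [div_le_iff₀' hpos]
      exact_mod_cast le_factorial_mul_pow hF b p
    exact h2.trans_lt h1
end

section
/- For all integers N > m ≥ 2 with N ≡ m (mod 2), one has C₀(N, m+2)/C₀(N, m) = 6 · [ (1 + 2/(N−m)) · (1 + 4m/(3(N−m))) ] / [ (1 + 2m/(N−m) + 2/(N−m)) · (1 + 2m/(N−m) + 1/(N−m)) ] · (1 − 1/(4m²)) / (1 − 1/m). Consequently, for every μ₁ ∈ ℝ, P_N(m+2)/P_N(m) = 6 e^{−μ₁} times the displayed rational expression. -/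
/-!
Increasing `m` by `2` at fixed `N` lowers `j = (N - m) / 2` by `1`, so every factorial in `C₀`
moves by a bounded number of steps and the ratio is a rational function of `m` and `j`.
Parametrising by `m = a + 2`, `N = a + 2 + 2 j` removes all truncated subtractions
(`C₀_add_two`); the ratio is then a cancellation of factorials (`C₀_step_ratio`).
For `P`, the common factor `Θ` cancels because it is a sum of nonnegative terms with a positive one,
and the exponential weights contribute `e^{-μ₁}`.
-/

open Finset

/-- `C₀ N m` is the number of rooted triangulations of the disk with `N` triangles and
`m` boundary edges: for `m ≥ 2`, `N ≥ m`, `N ≡ m (mod 2)` and `j = (N−m)/2` it equals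
`2^{j+2}·(2m+3j−1)!·(2m−3)! / ((j+1)!·(2m+2j)!·((m−2)!)²)`, and `0` otherwise. -/
noncomputable def C₀ (N m : ℕ) : ℝ :=
  if 2 ≤ m ∧ m ≤ N ∧ N % 2 = m % 2 then
    (2 : ℝ) ^ ((N - m) / 2 + 2) *
      (Nat.factorial (2 * m + 3 * ((N - m) / 2) - 1) : ℝ) *
      (Nat.factorial (2 * m - 3) : ℝ) /
      ((Nat.factorial ((N - m) / 2 + 1) : ℝ) *
        (Nat.factorial (2 * m + 2 * ((N - m) / 2)) : ℝ) *
        (Nat.factorial (m - 2) : ℝ) ^ 2)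
  else 0

/-- The partition function `Θ_N(μ₁) = Σ_m e^{−μ₁ m/2} C₀(N,m)`. -/
noncomputable def Θ (μ₁ : ℝ) (N : ℕ) : ℝ :=
  ∑ m ∈ Finset.range (N + 1), Real.exp (-μ₁ * m / 2) * C₀ N m

/-- The boundary-length distribution `P_N(m) = e^{−μ₁ m/2} C₀(N,m) / Θ_N(μ₁)`. -/
noncomputable def P (μ₁ : ℝ) (N m : ℕ) : ℝ :=
  Real.exp (-μ₁ * m / 2) * C₀ N m / Θ μ₁ N

/-- `C₀` in the coordinates `m = a + 2`, `j = (N - m) / 2`, free of truncated subtraction. -/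
lemma C₀_add_two (a j : ℕ) :
    C₀ (a + 2 + 2 * j) (a + 2) =
      (2 : ℝ) ^ (j + 2) * ((2 * a + 3 * j + 3).factorial : ℝ) * ((2 * a + 1).factorial : ℝ) /
        (((j + 1).factorial : ℝ) * ((2 * a + 2 * j + 4).factorial : ℝ) *
          (a.factorial : ℝ) ^ 2) := by
  have hj : (a + 2 + 2 * j - (a + 2)) / 2 = j := by omega
  have h1 : 2 * (a + 2) + 3 * j - 1 = 2 * a + 3 * j + 3 := by omega
  have h2 : 2 * (a + 2) - 3 = 2 * a + 1 := by omega
  have h3 : 2 * (a + 2) + 2 * j = 2 * a + 2 * j + 4 := by omega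
  have h4 : a + 2 - 2 = a := by omega
  rw [C₀, if_pos ⟨by omega, by omega, by omega⟩, hj, h1, h2, h3, h4]

lemma C₀_nonneg (N m : ℕ) : 0 ≤ C₀ N m := by
  unfold C₀
  split_ifs <;> positivity

lemma C₀_pos {N m : ℕ} (hm : 2 ≤ m) (hmN : m ≤ N) (hpar : N % 2 = m % 2) : 0 < C₀ N m := by
  rw [C₀, if_pos ⟨hm, hmN, hpar⟩]
  positivity

lemma Θ_pos (μ₁ : ℝ) {N m : ℕ} (hm : 2 ≤ m) (hmN : m ≤ N) (hpar : N % 2 = m % 2) :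
    0 < Θ μ₁ N :=
  Finset.sum_pos' (fun i _ => mul_nonneg (Real.exp_pos _).le (C₀_nonneg N i))
    ⟨m, Finset.mem_range.2 (by omega), mul_pos (Real.exp_pos _) (C₀_pos hm hmN hpar)⟩

/-- The one-step ratio with `m = a + 2` and `j = (N - m) / 2 = k + 1`: after cancellation it is
`(j + 1) (2 m + 3 j) (2 m - 1) (2 m + 1) / ((m + j + 1) (2 m + 2 j + 1) m (m - 1))`. -/
lemma C₀_step_ratio (a k : ℕ) :
    C₀ (a + 2 + 2 * (k + 1)) (a + 2 + 2) / C₀ (a + 2 + 2 * (k + 1)) (a + 2) =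
      ((k + 2) * (2 * a + 3 * k + 7) * (2 * a + 3) * (2 * a + 5) : ℝ) /
        ((a + k + 4) * (2 * a + 2 * k + 7) * (a + 2) * (a + 1)) := by
  have hN : a + 2 + 2 * (k + 1) = a + 2 + 2 + 2 * k := by ring
  rw [C₀_add_two a (k + 1), hN, C₀_add_two (a + 2) k]
  -- Every factorial is reduced to one of five bases, which then cancel.
  have e1 : 2 * (a + 2) + 3 * k + 3 = (2 * a + 3 * k + 6) + 1 := by ring
  have e2 : 2 * a + 3 * (k + 1) + 3 = 2 * a + 3 * k + 6 := by ring
  have e3 : 2 * (a + 2) + 1 = (2 * a + 1) + 1 + 1 + 1 + 1 := by ring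
  have e4 : 2 * (a + 2) + 2 * k + 4 = (2 * a + 2 * k + 6) + 1 + 1 := by ring
  have e5 : 2 * a + 2 * (k + 1) + 4 = 2 * a + 2 * k + 6 := by ring
  rw [e1, e2, e3, e4, e5, Nat.factorial_succ (2 * a + 3 * k + 6),
    Nat.factorial_succ (2 * a + 1 + 1 + 1 + 1), Nat.factorial_succ (2 * a + 1 + 1 + 1),
    Nat.factorial_succ (2 * a + 1 + 1), Nat.factorial_succ (2 * a + 1),
    Nat.factorial_succ (2 * a + 2 * k + 6 + 1), Nat.factorial_succ (2 * a + 2 * k + 6),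
    Nat.factorial_succ (k + 1), Nat.factorial_succ (a + 1), Nat.factorial_succ a]
  have p1 : ((2 * a + 3 * k + 6).factorial : ℝ) ≠ 0 := by positivity
  have p2 : ((2 * a + 1).factorial : ℝ) ≠ 0 := by positivity
  have p3 : ((2 * a + 2 * k + 6).factorial : ℝ) ≠ 0 := by positivity
  have p4 : ((k + 1).factorial : ℝ) ≠ 0 := by positivity
  have p5 : (a.factorial : ℝ) ≠ 0 := by positivity
  generalize (2 * a + 3 * k + 6).factorial = F1 at *
  generalize (2 * a + 1).factorial = F2 at *
  generalize (2 * a + 2 * k + 6).factorial = F3 at *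
  generalize (k + 1).factorial = F4 at *
  generalize a.factorial = F5 at *
  push_cast
  field_simp
  ring

/-- For all integers `N > m ≥ 2` with `N ≡ m (mod 2)`, the one-step ratio
`C₀(N,m+2)/C₀(N,m)` equals the displayed rational expression, and consequently
`P_N(m+2)/P_N(m) = 6 e^{−μ₁}` times that expression. -/
theorem ratio_identity (N m : ℕ) (hm : 2 ≤ m) (hmN : m < N) (hpar : N % 2 = m % 2) :
    C₀ N (m + 2) / C₀ N m =
      6 * ((1 + 2 / ((N : ℝ) - m)) * (1 + 4 * m / (3 * ((N : ℝ) - m)))) /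
        ((1 + 2 * m / ((N : ℝ) - m) + 2 / ((N : ℝ) - m)) *
          (1 + 2 * m / ((N : ℝ) - m) + 1 / ((N : ℝ) - m))) *
        ((1 - 1 / (4 * (m : ℝ) ^ 2)) / (1 - 1 / (m : ℝ))) ∧
    ∀ μ₁ : ℝ,
      P μ₁ N (m + 2) / P μ₁ N m =
        6 * Real.exp (-μ₁) *
          (((1 + 2 / ((N : ℝ) - m)) * (1 + 4 * m / (3 * ((N : ℝ) - m)))) /
            ((1 + 2 * m / ((N : ℝ) - m) + 2 / ((N : ℝ) - m)) *
              (1 + 2 * m / ((N : ℝ) - m) + 1 / ((N : ℝ) - m))) *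
            ((1 - 1 / (4 * (m : ℝ) ^ 2)) / (1 - 1 / (m : ℝ)))) := by
  have hC : C₀ N (m + 2) / C₀ N m =
      6 * ((1 + 2 / ((N : ℝ) - m)) * (1 + 4 * m / (3 * ((N : ℝ) - m)))) /
        ((1 + 2 * m / ((N : ℝ) - m) + 2 / ((N : ℝ) - m)) *
          (1 + 2 * m / ((N : ℝ) - m) + 1 / ((N : ℝ) - m))) *
        ((1 - 1 / (4 * (m : ℝ) ^ 2)) / (1 - 1 / (m : ℝ))) := by
    obtain ⟨a, rfl⟩ : ∃ a, m = a + 2 := ⟨m - 2, by omega⟩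
    obtain ⟨k, rfl⟩ : ∃ k, N = a + 2 + 2 * (k + 1) := ⟨(N - a - 4) / 2, by omega⟩
    rw [C₀_step_ratio]
    have hd : ((a + 2 + 2 * (k + 1) : ℕ) : ℝ) - ((a + 2 : ℕ) : ℝ) = 2 * (k + 1) := by
      push_cast
      ring
    rw [hd]
    push_cast
    have ha : (1 : ℝ) - 1 / (a + 2) = (a + 1) / (a + 2) := by
      field_simp
      ring
    rw [ha]
    field_simp
    ring
  refine ⟨hC, fun μ₁ => ?_⟩
  have hexp : Real.exp (-μ₁ * ((m + 2 : ℕ) : ℝ) / 2) =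
      Real.exp (-μ₁) * Real.exp (-μ₁ * m / 2) := by
    rw [← Real.exp_add]
    congr 1
    push_cast
    ring
  have hΘ : Θ μ₁ N ≠ 0 := (Θ_pos μ₁ hm hmN.le hpar).ne'
  have hE : Real.exp (-μ₁ * m / 2) ≠ 0 := (Real.exp_pos _).ne'
  have hP : P μ₁ N (m + 2) / P μ₁ N m = Real.exp (-μ₁) * (C₀ N (m + 2) / C₀ N m) := by
    have hCm : C₀ N m ≠ 0 := (C₀_pos hm hmN.le hpar).ne'
    unfold P
    rw [hexp]
    field_simp
  rw [hP, hC]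
  ring
end

section
/- For every real μ and every f : ℕ → ℂ with f(0) = 0, Σ_n |f(n)|² < ∞, and n·f(n+1) + (n−1)·f(n−1) = μ·f(n) for all n ≥ 1, one has f = 0. -/
/-!
Real and imaginary parts satisfy the same real recurrence, so let `g` be a real solution. Multiplying
`n g(n+1) + (n-1) g(n-1) = μ g(n)` by `n g(n+1)` and by `(n-1) g(n-1)` and comparing shows that
`G n = n² (g(n)² + g(n+1)²) - μ n g(n) g(n+1)` satisfies the exact identity
`G n = G (n-1) + (2n-1) g(n)²`, with `G 1 = g(1)²`. On the other hand
`G n ≤ (n² + |μ| n / 2) (g(n)² + g(n+1)²)`, so over two steps `G` grows at least by the factor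
`1 + (2n-1)/(n² + |μ| n / 2)`. This forces linear growth of `G` when `g 1 ≠ 0`, hence
`g(n)² + g(n+1)² ≥ c / n` with `c > 0`, which contradicts square-summability by divergence of the
harmonic series. So `g 1 = 0`, and the recurrence gives `g = 0`.
-/

/-- The energy `G (m+1)`, where `G n = n² (g(n)² + g(n+1)²) - μ n g(n) g(n+1)`. -/
noncomputable def jacobiEnergy (μ : ℝ) (g : ℕ → ℝ) (m : ℕ) : ℝ :=
  ((m : ℝ) + 1) ^ 2 * (g (m + 1) ^ 2 + g (m + 2) ^ 2) - μ * ((m : ℝ) + 1) * (g (m + 1) * g (m + 2))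

lemma jacobiEnergy_succ {μ : ℝ} {g : ℕ → ℝ}
    (hrec : ∀ n : ℕ, ((n : ℝ) + 1) * g (n + 2) + (n : ℝ) * g n = μ * g (n + 1)) (m : ℕ) :
    jacobiEnergy μ g (m + 1) = jacobiEnergy μ g m + (2 * (m : ℝ) + 3) * g (m + 2) ^ 2 := by
  have h := hrec (m + 1)
  simp only [jacobiEnergy]
  push_cast at h ⊢
  simp only [add_assoc, Nat.reduceAdd] at h ⊢
  norm_num at h ⊢
  linear_combination (((m : ℝ) + 2) * g (m + 3) - ((m : ℝ) + 1) * g (m + 1)) * h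

lemma jacobiEnergy_le (μ : ℝ) (g : ℕ → ℝ) (m : ℕ) :
    jacobiEnergy μ g m ≤
      (((m : ℝ) + 1) ^ 2 + |μ| / 2 * ((m : ℝ) + 1)) * (g (m + 1) ^ 2 + g (m + 2) ^ 2) := by
  have h1 : -(μ * (g (m + 1) * g (m + 2))) ≤ |μ| / 2 * (g (m + 1) ^ 2 + g (m + 2) ^ 2) := by
    refine (neg_le_abs _).trans ?_
    rw [abs_mul]
    have h2 : |g (m + 1) * g (m + 2)| ≤ (g (m + 1) ^ 2 + g (m + 2) ^ 2) / 2 := by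
      rw [abs_le]
      constructor <;> nlinarith [sq_nonneg (g (m + 1) - g (m + 2)), sq_nonneg (g (m + 1) + g (m + 2))]
    nlinarith [mul_le_mul_of_nonneg_left h2 (abs_nonneg μ)]
  have hm : (0 : ℝ) ≤ (m : ℝ) + 1 := by positivity
  have := mul_le_mul_of_nonneg_left h1 hm
  unfold jacobiEnergy
  linarith

/-- Linear growth of the energy. The shift `|μ| + 3` is chosen so that `m + |μ| + 3` is a
subsolution of the two-step growth inequality from the very first step. -/
lemma jacobiEnergy_ge {μ : ℝ} {g : ℕ → ℝ}
    (hrec : ∀ n : ℕ, ((n : ℝ) + 1) * g (n + 2) + (n : ℝ) * g n = μ * g (n + 1))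
    {c : ℝ} (hc : 0 ≤ c) (h0 : c * (|μ| + 4) ≤ jacobiEnergy μ g 0) (m : ℕ) :
    c * ((m : ℝ) + |μ| + 3) ≤ jacobiEnergy μ g m := by
  have hstep := jacobiEnergy_succ hrec
  induction m using Nat.twoStepInduction with
  | zero => norm_num; nlinarith
  | one =>
    have := hstep 0
    norm_num at this ⊢
    nlinarith [sq_nonneg (g 2)]
  | more m ih _ =>
    have ha := abs_nonneg μ
    have hm : (0 : ℝ) ≤ m := m.cast_nonneg
    have e1 := hstep m
    have e2 := hstep (m + 1)
    have hle := jacobiEnergy_le μ g (m + 1)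
    push_cast at e2 hle ⊢
    simp only [add_assoc, Nat.reduceAdd] at e1 e2 hle ⊢
    norm_num at e1 e2 hle ⊢
    set s := g (m + 2) ^ 2 + g (m + 3) ^ 2 with hs
    have hD : (2 * (m : ℝ) + 3) * s ≤ jacobiEnergy μ g (m + 2) - jacobiEnergy μ g m := by
      nlinarith [sq_nonneg (g (m + 3))]
    have hmono : jacobiEnergy μ g m ≤ jacobiEnergy μ g (m + 1) := by
      rw [e1]; nlinarith [mul_nonneg (by positivity : (0 : ℝ) ≤ 2 * m + 3) (sq_nonneg (g (m + 2)))]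
    have hP : (0 : ℝ) < ((m : ℝ) + 2) ^ 2 + |μ| / 2 * ((m : ℝ) + 2) := by positivity
    set P := ((m : ℝ) + 2) ^ 2 + |μ| / 2 * ((m : ℝ) + 2) with hPd
    have hkey : 2 * P ≤ (2 * (m : ℝ) + 3) * ((m : ℝ) + |μ| + 3) := by
      rw [hPd]; nlinarith [mul_nonneg hm ha]
    have h2c : 2 * c ≤ (2 * (m : ℝ) + 3) * s := by
      refine le_of_mul_le_mul_left ?_ hP
      calc P * (2 * c) = c * (2 * P) := by ring
        _ ≤ c * ((2 * (m : ℝ) + 3) * ((m : ℝ) + |μ| + 3)) := mul_le_mul_of_nonneg_left hkey hc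
        _ = (2 * (m : ℝ) + 3) * (c * ((m : ℝ) + |μ| + 3)) := by ring
        _ ≤ (2 * (m : ℝ) + 3) * (P * s) := by
          refine mul_le_mul_of_nonneg_left ?_ (by positivity)
          linarith
        _ = P * ((2 * (m : ℝ) + 3) * s) := by ring
    linarith

lemma real_jacobi_no_point_spectrum {μ : ℝ} {g : ℕ → ℝ} (h0 : g 0 = 0)
    (hsum : Summable fun n : ℕ => g n ^ 2)
    (hrec : ∀ n : ℕ, ((n : ℝ) + 1) * g (n + 2) + (n : ℝ) * g n = μ * g (n + 1)) (n : ℕ) :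
    g n = 0 := by
  have h1 : g 1 = 0 := by
    by_contra hne
    have ha := abs_nonneg μ
    have hE0 : jacobiEnergy μ g 0 = g 1 ^ 2 := by
      have := hrec 0
      norm_num at this
      simp only [jacobiEnergy]
      norm_num
      rw [this]; ring
    obtain ⟨c, hc, hcE⟩ : ∃ c : ℝ, 0 < c ∧ c * (|μ| + 4) ≤ jacobiEnergy μ g 0 := by
      refine ⟨g 1 ^ 2 / (|μ| + 4), by positivity, ?_⟩
      rw [hE0, div_mul_cancel₀ _ (by positivity)]
    have hs : Summable fun m : ℕ => c⁻¹ * (g (m + 1) ^ 2 + g (m + 2) ^ 2) :=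
      (((summable_nat_add_iff 1).2 hsum).add ((summable_nat_add_iff 2).2 hsum)).mul_left _
    have hharm : Summable fun m : ℕ => 1 / (((m + 1 : ℕ) : ℝ)) := by
      refine hs.of_nonneg_of_le (fun m => by positivity) fun m => ?_
      have hlow := (jacobiEnergy_ge hrec hc.le hcE m).trans (jacobiEnergy_le μ g m)
      have hm : (0 : ℝ) ≤ m := m.cast_nonneg
      set s := g (m + 1) ^ 2 + g (m + 2) ^ 2
      push_cast
      rw [inv_mul_eq_div, div_le_div_iff₀ (by positivity) hc, one_mul]
      refine le_of_mul_le_mul_left ?_ (by positivity : (0 : ℝ) < m + 1 + |μ| / 2)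
      nlinarith [mul_nonneg hc.le ha]
    exact Real.not_summable_one_div_natCast
      ((summable_nat_add_iff (f := fun n : ℕ => 1 / (n : ℝ)) 1).1 hharm)
  induction n using Nat.twoStepInduction with
  | zero => exact h0
  | one => exact h1
  | more n ha hb =>
    have h := hrec n
    rw [ha, hb, mul_zero, mul_zero, add_zero] at h
    exact (mul_eq_zero.1 h).resolve_left (by positivity)

/-- Absence of point spectrum for the Hamiltonian of quantum expansion and contraction
of one-dimensional space: for every real `μ` and every `f : ℕ → ℂ` with `f(0) = 0`,
`Σ |f(n)|² < ∞` and `n·f(n+1) + (n−1)·f(n−1) = μ·f(n)` for all `n ≥ 1`, one has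
`f = 0`. -/
theorem jacobi_no_point_spectrum (μ : ℝ) (f : ℕ → ℂ) (h0 : f 0 = 0)
    (hsum : Summable fun n : ℕ => ‖f n‖ ^ 2)
    (hrec : ∀ n : ℕ, ((n : ℂ) + 1) * f (n + 2) + (n : ℂ) * f n = (μ : ℂ) * f (n + 1)) :
    ∀ n : ℕ, f n = 0 := by
  intro n
  apply Complex.ext
  · refine real_jacobi_no_point_spectrum (μ := μ) (g := fun n => (f n).re) (by simp [h0]) ?_ ?_ n
    · refine hsum.of_nonneg_of_le (fun n => sq_nonneg _) fun n => ?_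
      exact sq_le_sq.2 (by simpa using Complex.abs_re_le_norm (f n))
    · intro n
      simpa using congrArg Complex.re (hrec n)
  · refine real_jacobi_no_point_spectrum (μ := μ) (g := fun n => (f n).im) (by simp [h0]) ?_ ?_ n
    · refine hsum.of_nonneg_of_le (fun n => sq_nonneg _) fun n => ?_
      exact sq_le_sq.2 (by simpa using Complex.abs_im_le_norm (f n))
    · intro n
      simpa using congrArg Complex.im (hrec n)
end
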